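/- arXiv:1910.00980 — 3 statements merged into one kernel-verified Lean document; each statement's English description precedes it below -/
import Mathlib

section
/- Let N = 2 and let θ = (θ_1, θ_2) be a global classical solution of the delayed Kuramoto system with initial phase diameter D_{θ0} := |θ_1(0) − θ_2(0)| ∈ (π/2, π − δ) for some δ ∈ (0, π/2). Assume κ > D(Ω)/(cos(R_ω τ) · sin(D_{θ0} + R_ω τ)) and τ < min{δ/(2R_ω), (π/2 − D_*)/R_ω}, where D_* := π − D_{θ0}. Then the upper Dini derivative at the initial time satisfies D⁺ D(θ(t))|_{t=0} ≤ D(Ω) − κ cos(R_ω τ) sin(D_{θ0} + R_ω τ) < 0, and there exists t_* > 0 such that D(θ(t)) < D_* for all t > t_*. -/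
/-!
With `φ = θ₁ - θ₂`, the sum-to-product formula turns the equation of motion into
`φ'(t) = Ω₁ - Ω₂ - κ sin ((φ(t) + φ(t-τ))/2) cos ((Δ₁ + Δ₂)/2)`, where `Δᵢ = θᵢ(t) - θᵢ(t-τ)`
is at most `Rω τ` in absolute value by the mean value inequality. While `φ(t)` lies in
`[D_*, D₀]`, the sine's argument lies in `[D_* - Rω τ, D₀ + Rω τ]`, an interval symmetric about
`π/2`, so the sine is at least `sin (D₀ + Rω τ)`; this gives
`φ' ≤ D(Ω) - κ cos (Rω τ) sin (D₀ + Rω τ) < 0` (`phase_velocity_le`).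
Exchanging the oscillators covers negative `φ`. At `t = 0` this is the bound on the Dini
derivative; for the confinement, `φ²` has a uniformly negative derivative whenever it lies in
`[D_*², D₀²]`, so it falls below `D_*²` and cannot come back (`eventually_lt_of_deriv_le`).
-/

open Real Filter Set

/-- Upper Dini derivative. -/
noncomputable def diniUpper (f : ℝ → ℝ) (t : ℝ) : ℝ :=
  Filter.limsup (fun h => (f (t + h) - f t) / h) (nhdsWithin 0 (Set.Ioi 0))

/-- Trapping: a function starting at `b` whose derivative is at most `-c < 0` whenever its value
lies in `[a, b]` eventually stays below `a`. -/
theorem eventually_lt_of_deriv_le {F F' : ℝ → ℝ} {a b c : ℝ} (hc : 0 < c) (hab : a < b)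
    (hF : ∀ t, HasDerivAt F (F' t) t) (h0 : F 0 = b)
    (hd : ∀ t, 0 ≤ t → a ≤ F t → F t ≤ b → F' t ≤ -c) :
    ∃ T > (0 : ℝ), ∀ t > T, F t < a := by
  have hcont : Continuous F := continuous_iff_continuousAt.2 fun t => (hF t).continuousAt
  -- A level `m ∈ [a, b]` can only be crossed downwards.
  have barrier : ∀ m, a ≤ m → m ≤ b → ∀ s, 0 ≤ s → F s ≤ m → ∀ t, s ≤ t → F t ≤ m := by
    intro m ham hmb s hs hsm t hst
    refine image_le_of_deriv_right_lt_deriv_boundary (a := s) (b := t) (B := fun _ => m)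
      (B' := fun _ => 0) hcont.continuousOn (fun x _ => (hF x).hasDerivWithinAt) hsm
      (fun x => hasDerivAt_const x m) ?_ ⟨hst, le_rfl⟩
    intro x hx hxm
    have := hd x (hs.trans hx.1) (by simpa [hxm] using ham) (by simpa [hxm] using hmb)
    linarith
  have hub : ∀ t, 0 ≤ t → F t ≤ b := barrier b hab.le le_rfl 0 le_rfl h0.le
  obtain ⟨T, hT, hFT⟩ : ∃ T > (0 : ℝ), F T < a := by
    by_contra! hcon
    have hpos : 0 < (b - a) / c + 1 := by
      have := div_pos (sub_pos.2 hab) hc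
      linarith
    have hle := (convex_Icc (0 : ℝ) ((b - a) / c + 1)).image_sub_le_mul_sub_of_deriv_le
      hcont.continuousOn (fun x _ => (hF x).differentiableAt.differentiableWithinAt)
      (C := -c) (fun x hx => by
        rw [interior_Icc] at hx
        rw [(hF x).deriv]
        exact hd x hx.1.le (hcon x hx.1) (hub x hx.1.le))
      0 ⟨le_rfl, hpos.le⟩ _ ⟨hpos.le, le_rfl⟩ hpos.le
    have h1 := hcon _ hpos
    have h2 : c * ((b - a) / c) = b - a := by field_simp
    nlinarith
  refine ⟨T, hT, fun t ht => ?_⟩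
  have hle := barrier a le_rfl hab.le T hT.le hFT.le
  refine lt_of_le_of_ne (hle t ht.le) fun heq => ?_
  -- Touching the level `a` would be a local maximum, with vanishing derivative.
  have hmax : IsLocalMax F t := by
    filter_upwards [lt_mem_nhds ht] with x hx
    rw [heq]
    exact hle x hx.le
  have h1 := hmax.hasDerivAt_eq_zero (hF t)
  have h2 := hd t (hT.le.trans ht.le) heq.ge (by rw [heq]; exact hab.le)
  linarith

/-- The velocity of the phase difference at one instant: `a`, `b` are the current phases, `a'`,
`b'` the delayed ones, and `r` bounds the phase increments over one delay. -/
theorem phase_velocity_le {a b a' b' r D₀ κ Ω₁ Ω₂ : ℝ} (hκ : 0 ≤ κ)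
    (hr : r < π / 2) (hD : π / 2 ≤ D₀ + r) (hD' : D₀ + r ≤ π)
    (ha : |a - a'| ≤ r) (hb : |b - b'| ≤ r) (hlo : π - D₀ ≤ a - b) (hhi : a - b ≤ D₀) :
    (Ω₁ + (κ / 2) * sin (b' - a)) - (Ω₂ + (κ / 2) * sin (a' - b)) ≤
      |Ω₁ - Ω₂| - κ * cos r * sin (D₀ + r) := by
  obtain ⟨ha1, ha2⟩ := abs_le.1 ha
  obtain ⟨hb1, hb2⟩ := abs_le.1 hb
  set x := ((a - b) + (a' - b')) / 2 with hx
  set y := ((a - a') + (b - b')) / 2 with hy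
  have hsum : sin (b' - a) - sin (a' - b) = -(2 * (sin x * cos y)) := by
    have e1 : b' - a = -(x + y) := by rw [hx, hy]; ring
    have e2 : a' - b = x - y := by rw [hx, hy]; ring
    rw [e1, e2, sin_neg, sin_add, sin_sub]; ring
  have hcos : cos r ≤ cos y := by
    rw [← cos_abs y]
    exact cos_le_cos_of_nonneg_of_le_pi (abs_nonneg _) (by linarith [pi_pos])
      (abs_le.2 ⟨by linarith, by linarith⟩)
  -- `x` is within `D₀ + r - π/2` of `π/2`, and `sin z = cos (z - π/2)`.
  have hsin : sin (D₀ + r) ≤ sin x := by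
    rw [← cos_sub_pi_div_two, ← cos_sub_pi_div_two x, ← cos_abs (x - π / 2)]
    exact cos_le_cos_of_nonneg_of_le_pi (abs_nonneg _) (by linarith [pi_pos])
      (abs_le.2 ⟨by linarith, by linarith⟩)
  have hc0 : 0 ≤ cos r := cos_nonneg_of_mem_Icc ⟨by linarith, by linarith⟩
  have hs0 : 0 ≤ sin (D₀ + r) := sin_nonneg_of_nonneg_of_le_pi (by linarith [pi_pos]) hD'
  have hmul : sin (D₀ + r) * cos r ≤ sin x * cos y :=
    mul_le_mul hsin hcos hc0 (hs0.trans hsin)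
  have := mul_le_mul_of_nonneg_left hmul hκ
  have hΩ := le_abs_self (Ω₁ - Ω₂)
  calc _ = (Ω₁ - Ω₂) + (κ / 2) * (sin (b' - a) - sin (a' - b)) := by ring
    _ = (Ω₁ - Ω₂) - κ * (sin x * cos y) := by rw [hsum]; ring
    _ ≤ _ := by linarith


/-- The case of two oscillators: under the adapted coupling
condition `κ > D(Ω)/(cos(R_ω τ) sin(D_{θ0} + R_ω τ))`, the phase diameter
strictly decreases initially and is eventually confined below the dual angle
`D_* = π - D_{θ0}`. -/
theorem delayed_kuramoto_two_oscillators
    (θ₁ θ₂ : ℝ → ℝ) (Ω₁ Ω₂ κ τ δ Rω Dθ0 DΩ Dstar : ℝ)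
    (hκ : 0 < κ) (hτ : 0 ≤ τ)
    (hC1 : ContDiff ℝ 1 θ₁) (hC2 : ContDiff ℝ 1 θ₂)
    (hODE1 : ∀ t : ℝ, 0 < t →
      deriv θ₁ t = Ω₁ + (κ / 2) * Real.sin (θ₂ (t - τ) - θ₁ t))
    (hODE2 : ∀ t : ℝ, 0 < t →
      deriv θ₂ t = Ω₂ + (κ / 2) * Real.sin (θ₁ (t - τ) - θ₂ t))
    (hRω : IsLUB {x : ℝ | ∃ t : ℝ, -τ ≤ t ∧ (x = |deriv θ₁ t| ∨ x = |deriv θ₂ t|)} Rω)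
    (hDθ0 : Dθ0 = |θ₁ 0 - θ₂ 0|) (hDΩ : DΩ = |Ω₁ - Ω₂|)
    (hDstar : Dstar = π - Dθ0)
    (hδ : 0 < δ) (hδ' : δ < π / 2)
    (hH1 : π / 2 < Dθ0 ∧ Dθ0 < π - δ)
    (hκ2 : κ > DΩ / (Real.cos (Rω * τ) * Real.sin (Dθ0 + Rω * τ)))
    (hH3 : τ < min (δ / (2 * Rω)) ((π / 2 - Dstar) / Rω)) :
    diniUpper (fun t => |θ₁ t - θ₂ t|) 0 ≤
      DΩ - κ * Real.cos (Rω * τ) * Real.sin (Dθ0 + Rω * τ) ∧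
    DΩ - κ * Real.cos (Rω * τ) * Real.sin (Dθ0 + Rω * τ) < 0 ∧
    ∃ tstar > (0 : ℝ), ∀ t > tstar, |θ₁ t - θ₂ t| < Dstar := by
  obtain ⟨hH1a, hH1b⟩ := hH1
  have hd1 := hC1.differentiable one_ne_zero
  have hd2 := hC2.differentiable one_ne_zero
  have hbd1 : ∀ t, -τ ≤ t → |deriv θ₁ t| ≤ Rω := fun t ht => hRω.1 ⟨t, ht, Or.inl rfl⟩
  have hbd2 : ∀ t, -τ ≤ t → |deriv θ₂ t| ≤ Rω := fun t ht => hRω.1 ⟨t, ht, Or.inr rfl⟩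
  have hR0 : 0 ≤ Rω := (abs_nonneg _).trans (hbd1 0 (by linarith))
  -- For `Rω = 0` the junk value `δ / 0 = 0` would make the bound on `τ` contradict `0 ≤ τ`.
  have hR : 0 < Rω := by
    refine lt_of_le_of_ne hR0 fun h => ?_
    rw [← h] at hH3
    simp at hH3
    linarith
  obtain ⟨hτ1, hτ2⟩ := lt_min_iff.1 hH3
  rw [lt_div_iff₀ (by positivity)] at hτ1
  rw [lt_div_iff₀ hR] at hτ2
  set r := Rω * τ with hr
  have hr0 : 0 ≤ r := by positivity
  have hr1 : r < δ / 2 := by rw [hr]; linarith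
  have hr2 : r < π / 2 := by linarith [pi_pos]
  have hcos : 0 < cos r := cos_pos_of_mem_Ioo ⟨by linarith, by linarith⟩
  have hsin : 0 < sin (Dθ0 + r) := sin_pos_of_pos_of_lt_pi (by linarith [pi_pos]) (by linarith)
  have hneg : DΩ - κ * cos r * sin (Dθ0 + r) < 0 := by
    have := (div_lt_iff₀ (mul_pos hcos hsin)).1 hκ2
    linarith [mul_assoc κ (cos r) (sin (Dθ0 + r))]
  -- Continuity of the derivatives extends the equations to the initial time.
  have hode1 : ∀ t, 0 ≤ t → deriv θ₁ t = Ω₁ + (κ / 2) * sin (θ₂ (t - τ) - θ₁ t) := by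
    have h : EqOn (deriv θ₁) (fun t => Ω₁ + (κ / 2) * sin (θ₂ (t - τ) - θ₁ t)) (Ioi 0) := hODE1
    have := h.closure (hC1.continuous_deriv le_rfl)
      (by have := hC1.continuous; have := hC2.continuous; fun_prop)
    rw [closure_Ioi] at this
    exact fun t ht => this ht
  have hode2 : ∀ t, 0 ≤ t → deriv θ₂ t = Ω₂ + (κ / 2) * sin (θ₁ (t - τ) - θ₂ t) := by
    have h : EqOn (deriv θ₂) (fun t => Ω₂ + (κ / 2) * sin (θ₁ (t - τ) - θ₂ t)) (Ioi 0) := hODE2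
    have := h.closure (hC2.continuous_deriv le_rfl)
      (by have := hC1.continuous; have := hC2.continuous; fun_prop)
    rw [closure_Ioi] at this
    exact fun t ht => this ht
  have hinc : ∀ θ : ℝ → ℝ, Differentiable ℝ θ → (∀ t, -τ ≤ t → |deriv θ t| ≤ Rω) →
      ∀ t, 0 ≤ t → |θ t - θ (t - τ)| ≤ r := by
    intro θ hd hb t ht
    have := (convex_Ici (-τ)).norm_image_sub_le_of_norm_deriv_le (f := θ) (C := Rω)
      (fun x _ => hd x) (fun x hx => hb x hx)
      (show t - τ ∈ Ici (-τ) from by simp only [mem_Ici]; linarith)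
      (show t ∈ Ici (-τ) from by simp only [mem_Ici]; linarith)
    simpa [abs_of_nonneg hτ, hr] using this
  -- The sign times `φ'` is the velocity of `|φ|`.
  have hkey : ∀ t, 0 ≤ t → Dstar ≤ |θ₁ t - θ₂ t| → |θ₁ t - θ₂ t| ≤ Dθ0 →
      (SignType.sign (θ₁ t - θ₂ t) : ℝ) * (deriv θ₁ t - deriv θ₂ t) ≤
        DΩ - κ * cos r * sin (Dθ0 + r) := by
    intro t ht hlo hhi
    have h1 := hinc θ₁ hd1 hbd1 t ht
    have h2 := hinc θ₂ hd2 hbd2 t ht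
    rw [hode1 t ht, hode2 t ht, hDΩ]
    rcases lt_trichotomy (θ₁ t - θ₂ t) 0 with h | h | h
    · rw [abs_of_neg h] at hlo hhi
      have := phase_velocity_le (Ω₁ := Ω₂) (Ω₂ := Ω₁) hκ.le hr2 (by linarith) (by linarith) h2 h1
        (show π - Dθ0 ≤ θ₂ t - θ₁ t by linarith) (by linarith)
      rw [abs_sub_comm] at this
      rw [sign_neg h, SignType.coe_neg_one]
      linarith
    · rw [h, abs_zero] at hlo
      linarith
    · rw [abs_of_pos h] at hlo hhi
      have := phase_velocity_le (Ω₁ := Ω₁) (Ω₂ := Ω₂) hκ.le hr2 (by linarith) (by linarith) h1 h2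
        (show π - Dθ0 ≤ θ₁ t - θ₂ t by linarith) (by linarith)
      rw [sign_pos h, SignType.coe_one, one_mul]
      exact this
  have hφ : ∀ t, HasDerivAt (fun t => θ₁ t - θ₂ t) (deriv θ₁ t - deriv θ₂ t) t :=
    fun t => (hd1 t).hasDerivAt.sub (hd2 t).hasDerivAt
  refine ⟨?_, hneg, ?_⟩
  · have hne : θ₁ 0 - θ₂ 0 ≠ 0 := by
      rw [← abs_pos, ← hDθ0]
      linarith [pi_pos]
    have hder := (hasDerivAt_abs hne).comp (0 : ℝ) (hφ 0)
    have hlim := hder.tendsto_slope_zero_right.limsup_eq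
    have hle := hkey 0 le_rfl (by linarith) hDθ0.ge
    rw [← hlim] at hle
    simpa only [diniUpper, Function.comp_def, smul_eq_mul, div_eq_inv_mul] using hle
  · have hDs : 0 < Dstar := by linarith
    set c := -(DΩ - κ * cos r * sin (Dθ0 + r)) with hc
    have hc0 : 0 < c := by linarith
    obtain ⟨T, hT, h⟩ := eventually_lt_of_deriv_le (F := fun t => (θ₁ t - θ₂ t) ^ 2)
      (a := Dstar ^ 2) (b := Dθ0 ^ 2) (c := 2 * Dstar * c) (by positivity)
      (pow_lt_pow_left₀ (by linarith) hDs.le two_ne_zero)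
      (fun t => (hφ t).pow 2) (by simp only [hDθ0, sq_abs]) (by
        intro t ht hlo hhi
        have hlo' : Dstar ≤ |θ₁ t - θ₂ t| := by
          simpa [abs_of_pos hDs] using sq_le_sq.1 hlo
        have hhi' : |θ₁ t - θ₂ t| ≤ Dθ0 := by
          simpa [abs_of_pos (show 0 < Dθ0 by linarith)] using sq_le_sq.1 hhi
        have hk := hkey t ht hlo' hhi'
        have hprod : (θ₁ t - θ₂ t) * (deriv θ₁ t - deriv θ₂ t) = |θ₁ t - θ₂ t| *
            ((SignType.sign (θ₁ t - θ₂ t) : ℝ) * (deriv θ₁ t - deriv θ₂ t)) := by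
          rw [← mul_assoc, mul_comm |θ₁ t - θ₂ t|, sign_mul_abs]
        have h1 : |θ₁ t - θ₂ t| *
            ((SignType.sign (θ₁ t - θ₂ t) : ℝ) * (deriv θ₁ t - deriv θ₂ t)) ≤
            |θ₁ t - θ₂ t| * (-c) :=
          mul_le_mul_of_nonneg_left (by linarith) (abs_nonneg _)
        have h2 : Dstar * c ≤ |θ₁ t - θ₂ t| * c := mul_le_mul_of_nonneg_right hlo' hc0.le
        norm_num
        linarith)
    refine ⟨T, hT, fun t ht => ?_⟩
    simpa [abs_of_pos hDs] using sq_lt_sq.1 (h t ht)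
end

section
/- Let N > 2 and let θ = (θ_1, …, θ_N) be a global classical solution of the delayed Kuramoto system satisfying (H1)–(H3). Then as long as D(θ(t)) remains in the interval [D_*, D_{θ0}], the phase diameter obeys the linear-in-time bound D(θ(t)) ≤ D_{θ0} + (D(Ω) − 2κ((N−2)/N) sin(D_{θ0}/2) cos(D_{θ0}/2 + R_ω τ)) · t, where by (H2) and (H3) the coefficient of t is strictly negative; consequently D(θ(t)) must leave the interval [D_*, D_{θ0}] in finite time. -/
open Real Filter Set
open scoped Topology

/-!
The phase diameter satisfies a one-sided differential inequality whose constant is the slope in the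
statement; a Dini-derivative comparison then gives the linear bound.

Fix a time `t` at which `D = D(θ(t))` lies in `[D_*, D_{θ0}]`, let `(i, j)` be a pair with
`θ_i - θ_j = D`, and put `x = R_ω τ`. By the mean value theorem each delayed phase `θ_k(t - τ)` is
within `x` of `θ_k(t)`, which lies in `[θ_j, θ_i]`. For `k ≠ i, j`, the sum-to-product formula gives
`sin (θ_k(t-τ) - θ_i) - sin (θ_k(t-τ) - θ_j) ≤ -2 sin (D/2) cos (D/2 + x)`, since the angle
`θ_k(t-τ) - (θ_i + θ_j)/2` has modulus at most `D/2 + x < π/2`. The two remaining terms have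
the favourable sign because `x ≤ D_* ≤ D` and `D + x ≤ π`. Finally `sin (D/2) cos (D/2 + x)` is
smallest on `[D_*, D_{θ0}]` at the right end point (`sin_mul_cos_lower`). Altogether
`(θ_i - θ_j)' ≤ c` with `c` the slope in the statement (`extremal_pair_bound`).

Pairs that are not extremal at `t` stay below `D(t) + r (s - t)` for `s` slightly after `t` by
continuity, and extremal ones do so for every `r > c` by the derivative bound
(`eventually_diam_lt`). Since the bound decreases without limit, the diameter cannot stay above
`D_* > 0` for ever.
-/

lemma abs_sub_le_diam {N : ℕ} (u : Fin N → ℝ) (i j : Fin N) :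
    |u i - u j| ≤ ⨆ i, ⨆ j, |u i - u j| :=
  (le_ciSup (f := fun j => |u i - u j|) (Set.finite_range _).bddAbove j).trans
    (le_ciSup (f := fun i => ⨆ j, |u i - u j|) (Set.finite_range _).bddAbove i)

lemma diam_lt {N : ℕ} (hN : 0 < N) (u : Fin N → ℝ) {b : ℝ}
    (h : ∀ i j, u i - u j < b) : (⨆ i, ⨆ j, |u i - u j|) < b := by
  have : Nonempty (Fin N) := ⟨⟨0, hN⟩⟩
  obtain ⟨i, hi⟩ := exists_eq_ciSup_of_finite (f := fun i => ⨆ j, |u i - u j|)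
  obtain ⟨j, hj⟩ := exists_eq_ciSup_of_finite (f := fun j => |u i - u j|)
  rw [← hi, ← hj]
  exact abs_lt.2 ⟨by linarith [h j i], h i j⟩

lemma sum_sub_le_card_mul {ι : Type*} (s : Finset ι) (f g : ι → ℝ) (b : ℝ)
    (h : ∀ k ∈ s, f k - g k ≤ b) : ∑ k ∈ s, f k - ∑ k ∈ s, g k ≤ s.card * b := by
  rw [← Finset.sum_sub_distrib, ← nsmul_eq_mul]
  exact Finset.sum_le_card_nsmul s _ b h

/-- On `[π - D₀, D₀]` the function `D ↦ sin (D/2) cos (D/2 + x)` is smallest at `D₀`: the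
difference of the two values is `cos ((D + D₀)/2 + x) * sin ((D - D₀)/2)`, a product of two
nonpositive factors. -/
lemma sin_mul_cos_lower {D₀ D x : ℝ} (hx : 0 ≤ x) (hD₀ : D₀ + x ≤ π)
    (h1 : π - D₀ ≤ D) (h2 : D ≤ D₀) :
    sin (D₀ / 2) * cos (D₀ / 2 + x) ≤ sin (D / 2) * cos (D / 2 + x) := by
  have hc : cos ((D + D₀) / 2 + x) ≤ 0 :=
    cos_nonpos_of_pi_div_two_le_of_le (by linarith) (by linarith [pi_pos])
  have hs : sin ((D - D₀) / 2) ≤ 0 :=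
    sin_nonpos_of_nonpos_of_neg_pi_le (by linarith) (by linarith)
  have key : sin (D / 2) * cos (D / 2 + x) - sin (D₀ / 2) * cos (D₀ / 2 + x)
      = cos ((D + D₀) / 2 + x) * sin ((D - D₀) / 2) := by
    have e1 : (D + D₀) / 2 + x = (D / 2 + D₀ / 2) + x := by ring
    have e2 : (D - D₀) / 2 = D / 2 - D₀ / 2 := by ring
    rw [e1, e2, cos_add (D / 2 + D₀ / 2), cos_add (D / 2), sin_add, cos_add (D / 2),
      cos_add (D₀ / 2), sin_sub]
    linear_combination
      -(cos (D / 2) * sin (D / 2) * cos x - sin (D / 2) ^ 2 * sin x) * sin_sq_add_cos_sq (D₀ / 2)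
      + (cos (D₀ / 2) * sin (D₀ / 2) * cos x - sin (D₀ / 2) ^ 2 * sin x) * sin_sq_add_cos_sq (D / 2)
  linarith [mul_nonneg_of_nonpos_of_nonpos hc hs]

/-- If the phases `u` have diameter `u i - u j = D ∈ [π - D₀, D₀]` and the delayed phases `a` are
within `x` of `u`, then the coupling pulls the extremal pair `(i, j)` together at a definite
rate. -/
lemma extremal_pair_bound {N : ℕ} (hN : 2 < N) (u a : Fin N → ℝ) (i j : Fin N) {D₀ x : ℝ}
    (hx : 0 ≤ x) (hD₀ : D₀ / 2 + x ≤ π / 2) (hD₀' : D₀ < π)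
    (ha : ∀ k, |a k - u k| ≤ x) (hu : ∀ k, u j ≤ u k ∧ u k ≤ u i)
    (h1 : π - D₀ ≤ u i - u j) (h2 : u i - u j ≤ D₀) :
    ∑ k ∈ Finset.univ.erase i, sin (a k - u i) - ∑ k ∈ Finset.univ.erase j, sin (a k - u j)
      ≤ -(2 * ((N : ℝ) - 2) * sin (D₀ / 2) * cos (D₀ / 2 + x)) := by
  have hij : i ≠ j := by
    rintro rfl
    linarith
  have ha' := fun k => abs_le.1 (ha k)
  rw [← Finset.add_sum_erase (Finset.univ.erase i) _
      (Finset.mem_erase.2 ⟨hij.symm, Finset.mem_univ j⟩),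
    ← Finset.add_sum_erase (Finset.univ.erase j) _
      (Finset.mem_erase.2 ⟨hij, Finset.mem_univ i⟩), Finset.erase_right_comm (a := j)]
  have hcard : ((((Finset.univ : Finset (Fin N)).erase i).erase j).card : ℝ) = (N : ℝ) - 2 := by
    rw [Finset.card_erase_of_mem (Finset.mem_erase.2 ⟨hij.symm, Finset.mem_univ j⟩),
      Finset.card_erase_of_mem (Finset.mem_univ i), Finset.card_univ, Fintype.card_fin,
      Nat.sub_sub, Nat.cast_sub hN.le]
    norm_num
  have hlow := sin_mul_cos_lower (D := u i - u j) hx (by linarith) h1 h2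
  have hs : 0 ≤ sin ((u i - u j) / 2) :=
    sin_nonneg_of_nonneg_of_le_pi (by linarith) (by linarith)
  have hsum := sum_sub_le_card_mul ((Finset.univ.erase i).erase j)
    (fun k => sin (a k - u i)) (fun k => sin (a k - u j))
    (-(2 * (sin (D₀ / 2) * cos (D₀ / 2 + x)))) (by
      intro k _
      have hcos : cos ((u i - u j) / 2 + x) ≤ cos (a k - (u i + u j) / 2) := by
        rw [← cos_abs (a k - (u i + u j) / 2)]
        refine cos_le_cos_of_nonneg_of_le_pi (abs_nonneg _) (by linarith) (abs_le.2 ⟨?_, ?_⟩)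
        · linarith [(hu k).1, (ha' k).1]
        · linarith [(hu k).2, (ha' k).2]
      have e : sin (a k - u i) - sin (a k - u j)
          = -(2 * (sin ((u i - u j) / 2) * cos (a k - (u i + u j) / 2))) := by
        rw [sin_sub_sin, show (a k - u i - (a k - u j)) / 2 = -((u i - u j) / 2) by ring,
          show (a k - u i + (a k - u j)) / 2 = a k - (u i + u j) / 2 by ring, sin_neg]
        ring
      simp only [e]
      linarith [mul_le_mul_of_nonneg_left hcos hs])
  have t1 : sin (a j - u i) ≤ 0 :=
    sin_nonpos_of_nonpos_of_neg_pi_le (by linarith [(ha' j).2]) (by linarith [(ha' j).1])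
  have t2 : 0 ≤ sin (a i - u j) :=
    sin_nonneg_of_nonneg_of_le_pi (by linarith [(ha' i).1]) (by linarith [(ha' i).2])
  rw [hcard] at hsum
  linarith

/-- If every pair realising the diameter at time `x` separates at rate less than `r`, then shortly
after `x` the diameter lies below the line of slope `r` through its value at `x`. -/
lemma eventually_diam_lt {N : ℕ} (hN : 0 < N) (θ : Fin N → ℝ → ℝ)
    (hθ : ∀ i, Differentiable ℝ (θ i)) (x r : ℝ)
    (h : ∀ i j, θ i x - θ j x = (⨆ i, ⨆ j, |θ i x - θ j x|) →
      deriv (θ i) x - deriv (θ j) x < r) :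
    ∀ᶠ z in 𝓝[>] x, (⨆ i, ⨆ j, |θ i z - θ j z|)
      < (⨆ i, ⨆ j, |θ i x - θ j x|) + r * (z - x) := by
  set D := ⨆ i, ⨆ j, |θ i x - θ j x| with hD
  have hp : ∀ i j, ∀ᶠ z in 𝓝[>] x, θ i z - θ j z < D + r * (z - x) := by
    intro i j
    have hle : θ i x - θ j x ≤ D :=
      (le_abs_self _).trans (abs_sub_le_diam (fun k => θ k x) i j)
    rcases hle.lt_or_eq with hlt | heq
    · have hc : Continuous fun z => D + r * (z - x) - (θ i z - θ j z) := by
        have := (hθ i).continuous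
        have := (hθ j).continuous
        fun_prop
      have : ∀ᶠ z in 𝓝 x, 0 < D + r * (z - x) - (θ i z - θ j z) :=
        hc.continuousAt.eventually (lt_mem_nhds (by simpa using hlt))
      filter_upwards [nhdsWithin_le_nhds this] with z hz
      linarith
    · have hd : HasDerivAt (fun z => θ i z - θ j z) (deriv (θ i) x - deriv (θ j) x) x :=
        (hθ i x).hasDerivAt.sub (hθ j x).hasDerivAt
      have hs := (hasDerivWithinAt_iff_tendsto_slope' (s := Ioi x) (by simp)).1
        hd.hasDerivWithinAt
      filter_upwards [hs.eventually (gt_mem_nhds (h i j heq)), self_mem_nhdsWithin] with z hz hxz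
      have hxz' : 0 < z - x := sub_pos.2 hxz
      rw [slope_def_field, div_lt_iff₀ hxz'] at hz
      linarith
  have hall : ∀ᶠ z in 𝓝[>] x, ∀ i j, θ i z - θ j z < D + r * (z - x) :=
    eventually_all.2 fun i => eventually_all.2 fun j => hp i j
  filter_upwards [hall] with z hz
  exact diam_lt hN (fun k => θ k z) hz

lemma continuous_diam {N : ℕ} (θ : Fin N → ℝ → ℝ) (hθ : ∀ i, Continuous (θ i)) (hN : 0 < N) :
    Continuous fun s => ⨆ i, ⨆ j, |θ i s - θ j s| := by
  have : Nonempty (Fin N) := ⟨⟨0, hN⟩⟩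
  simp only [← Finset.sup'_univ_eq_ciSup]
  refine Continuous.finset_sup'_apply _ fun i _ => Continuous.finset_sup'_apply _ fun j _ => ?_
  exact ((hθ i).sub (hθ j)).abs

/-- A `C¹` function whose derivative agrees with a continuous function on `t > 0` satisfies the
same equation at `t = 0`. -/
lemma deriv_eq_of_pos {f g : ℝ → ℝ} (hf : ContDiff ℝ 1 f) (hg : Continuous g)
    (h : ∀ t, 0 < t → deriv f t = g t) : ∀ t, 0 ≤ t → deriv f t = g t := by
  intro t ht
  have hcl : Set.EqOn (deriv f) g (closure (Ioi 0)) :=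
    Set.EqOn.closure (fun s hs => h s hs) (hf.continuous_deriv le_rfl) hg
  rw [closure_Ioi] at hcl
  exact hcl ht

/-- Under (H1)-(H3), as long as the phase diameter remains in
`[D_*, D_{θ0}]` it obeys a linear-in-time bound with strictly negative slope;
consequently it leaves `[D_*, D_{θ0}]` in finite time. -/
theorem delayed_kuramoto_diameter_linear_decay
    {N : ℕ} (hN : 2 < N)
    (θ : Fin N → ℝ → ℝ) (Ω : Fin N → ℝ) (κ τ δ Rω : ℝ)
    (Dθ0 DΩ Dstar : ℝ)
    (hκ : 0 < κ) (hτ : 0 ≤ τ)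
    (hC1 : ∀ i, ContDiff ℝ 1 (θ i))
    (hODE : ∀ i, ∀ t : ℝ, 0 < t →
      deriv (θ i) t = Ω i + (κ / (N : ℝ)) *
        ∑ k ∈ Finset.univ.erase i, Real.sin (θ k (t - τ) - θ i t))
    (hRω : IsLUB {x : ℝ | ∃ t : ℝ, -τ ≤ t ∧ ∃ i, x = |deriv (θ i) t|} Rω)
    (hDθ0 : Dθ0 = ⨆ i, ⨆ j, |θ i 0 - θ j 0|)
    (hDΩ : DΩ = ⨆ i, ⨆ j, |Ω i - Ω j|)
    (hDstar : Dstar = π - Dθ0)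
    (hδ : 0 < δ) (hδ' : δ < π / 2)
    (hH1 : π / 2 < Dθ0 ∧ Dθ0 < π - δ)
    (hH2 : κ > ((N : ℝ) / ((N : ℝ) - 2)) * DΩ /
      (2 * Real.sin (Dθ0 / 2) * Real.cos ((Dθ0 + δ) / 2)))
    (hH3 : τ < min (δ / (2 * Rω)) ((π / 2 - Dstar) / Rω)) :
    (∀ t ≥ (0 : ℝ),
      (∀ s ∈ Set.Icc (0 : ℝ) t, (⨆ i, ⨆ j, |θ i s - θ j s|) ∈ Set.Icc Dstar Dθ0) →
      (⨆ i, ⨆ j, |θ i t - θ j t|) ≤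
        Dθ0 + (DΩ - 2 * κ * (((N : ℝ) - 2) / (N : ℝ)) *
          Real.sin (Dθ0 / 2) * Real.cos (Dθ0 / 2 + Rω * τ)) * t) ∧
    (DΩ - 2 * κ * (((N : ℝ) - 2) / (N : ℝ)) *
      Real.sin (Dθ0 / 2) * Real.cos (Dθ0 / 2 + Rω * τ) < 0) ∧
    (∃ t1 ≥ (0 : ℝ), (⨆ i, ⨆ j, |θ i t1 - θ j t1|) ∉ Set.Icc Dstar Dθ0) := by
  have hN' : 0 < N := by omega
  have hNR : (2 : ℝ) < N := by exact_mod_cast hN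
  obtain ⟨hH1a, hH1b⟩ := hH1
  have hpi := pi_pos
  have hR0 : 0 ≤ Rω :=
    (abs_nonneg _).trans (hRω.1 ⟨0, by linarith, ⟨0, hN'⟩, rfl⟩)
  -- For `Rω = 0` the quotients in `hH3` are `0` in Lean, which contradicts `0 ≤ τ`.
  have hR : 0 < Rω := by
    rcases hR0.lt_or_eq with h | h
    · exact h
    · rw [← h] at hH3
      simp at hH3
      linarith
  have hx : 0 ≤ Rω * τ := mul_nonneg hR0 hτ
  have hxδ : Rω * τ < δ / 2 := by
    have h := (lt_min_iff.1 hH3).1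
    rw [lt_div_iff₀ (by linarith)] at h
    linarith
  have hs0 : 0 < sin (Dθ0 / 2) := sin_pos_of_pos_of_lt_pi (by linarith) (by linarith)
  have hc0 : 0 < cos ((Dθ0 + δ) / 2) :=
    cos_pos_of_mem_Ioo ⟨by linarith, by linarith⟩
  have hcc : cos ((Dθ0 + δ) / 2) < cos (Dθ0 / 2 + Rω * τ) :=
    cos_lt_cos_of_nonneg_of_le_pi (by linarith) (by linarith) (by linarith)
  set c := DΩ - 2 * κ * (((N : ℝ) - 2) / (N : ℝ)) * sin (Dθ0 / 2) * cos (Dθ0 / 2 + Rω * τ)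
    with hc
  have hcneg : c < 0 := by
    have hN2 : (0 : ℝ) < N - 2 := by linarith
    have hN0 : (0 : ℝ) < N := by linarith
    have hq : 0 < ((N : ℝ) - 2) / N := div_pos hN2 hN0
    have h := hH2
    rw [gt_iff_lt, div_lt_iff₀ (by positivity), div_mul_eq_mul_div, div_lt_iff₀ hN2] at h
    have h' : DΩ < 2 * κ * (((N : ℝ) - 2) / N) * sin (Dθ0 / 2) * cos ((Dθ0 + δ) / 2) := by
      rw [show 2 * κ * (((N : ℝ) - 2) / N) * sin (Dθ0 / 2) * cos ((Dθ0 + δ) / 2)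
        = (κ * (2 * sin (Dθ0 / 2) * cos ((Dθ0 + δ) / 2)) * (N - 2)) / N by ring,
        lt_div_iff₀ hN0]
      linarith
    have := mul_lt_mul_of_pos_left hcc
      (show 0 < 2 * κ * (((N : ℝ) - 2) / N) * sin (Dθ0 / 2) by positivity)
    linarith
  have hθd : ∀ i, Differentiable ℝ (θ i) := fun i => (hC1 i).differentiable one_ne_zero
  have hODE0 : ∀ i, ∀ t : ℝ, 0 ≤ t → deriv (θ i) t = Ω i + (κ / (N : ℝ)) *
      ∑ k ∈ Finset.univ.erase i, sin (θ k (t - τ) - θ i t) := by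
    intro i
    refine deriv_eq_of_pos (hC1 i) ?_ (hODE i)
    have hcont := fun k => (hC1 k).continuous
    fun_prop
  have hdelay : ∀ t : ℝ, 0 ≤ t → ∀ k, |θ k (t - τ) - θ k t| ≤ Rω * τ := by
    intro t ht k
    have h := Convex.norm_image_sub_le_of_norm_deriv_le (f := θ k) (s := Ici (-τ)) (C := Rω)
      (x := t) (y := t - τ) (fun s _ => hθd k s) (fun s hs => hRω.1 ⟨s, hs, k, rfl⟩)
      (convex_Ici _) (by simp only [mem_Ici]; linarith) (by simp only [mem_Ici]; linarith)
    simpa [Real.norm_eq_abs, abs_of_nonneg hτ] using h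
  have hbound : ∀ t ≥ (0 : ℝ),
      (∀ s ∈ Set.Icc (0 : ℝ) t, (⨆ i, ⨆ j, |θ i s - θ j s|) ∈ Set.Icc Dstar Dθ0) →
      (⨆ i, ⨆ j, |θ i t - θ j t|) ≤ Dθ0 + c * t := by
    intro t ht hD
    refine image_le_of_liminf_slope_right_le_deriv_boundary
      (f := fun s => ⨆ i, ⨆ j, |θ i s - θ j s|) (a := 0) (b := t)
      (B := fun s => Dθ0 + c * s) (B' := fun _ => c)
      (continuous_diam θ (fun i => (hC1 i).continuous) hN').continuousOn
      (by simp [hDθ0]) (by fun_prop) ?_ ?_ ⟨ht, le_rfl⟩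
    · intro s _
      simpa using (((hasDerivAt_id s).const_mul c).const_add Dθ0).hasDerivWithinAt
    · intro s hs r hr
      have hDs := hD s ⟨hs.1, hs.2.le⟩
      refine Eventually.frequently ?_
      have hev := eventually_diam_lt hN' θ hθd s r (by
        intro i j hij
        refine lt_of_le_of_lt ?_ hr
        have hu : ∀ k, θ j s ≤ θ k s ∧ θ k s ≤ θ i s := by
          intro k
          have h1 := (le_abs_self _).trans (abs_sub_le_diam (fun k => θ k s) i k)
          have h2 := (le_abs_self _).trans (abs_sub_le_diam (fun k => θ k s) k j)
          constructor <;> linarith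
        rw [← hij, hDstar] at hDs
        have hpair := extremal_pair_bound hN (fun k => θ k s) (fun k => θ k (s - τ)) i j
          hx (D₀ := Dθ0) (by linarith) (by linarith) (hdelay s hs.1) hu
          hDs.1 hDs.2
        have hΩ : Ω i - Ω j ≤ DΩ := by
          rw [hDΩ]
          exact (le_abs_self _).trans (abs_sub_le_diam Ω i j)
        have hm := mul_le_mul_of_nonneg_left hpair
          (show 0 ≤ κ / (N : ℝ) by positivity)
        rw [hODE0 i s hs.1, hODE0 j s hs.1, hc]
        have e : κ / (N : ℝ) * -(2 * ((N : ℝ) - 2) * sin (Dθ0 / 2) * cos (Dθ0 / 2 + Rω * τ))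
          = -(2 * κ * (((N : ℝ) - 2) / (N : ℝ)) * sin (Dθ0 / 2) * cos (Dθ0 / 2 + Rω * τ)) := by
          ring
        rw [e, mul_sub] at hm
        linarith)
      filter_upwards [hev, self_mem_nhdsWithin] with z hz hsz
      rw [slope_def_field, div_lt_iff₀ (sub_pos.2 hsz)]
      linarith
  refine ⟨hbound, hcneg, ?_⟩
  by_contra! hstay
  -- The linear bound vanishes at this time, while the diameter would be at least `Dstar > 0`.
  have hT : 0 ≤ Dθ0 / (-c) := div_nonneg (by linarith) (by linarith)
  have h := hbound _ hT (fun s hs => hstay s hs.1)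
  have h' := (hstay _ hT).1
  have e : c * (Dθ0 / (-c)) = -Dθ0 := by
    field_simp [hcneg.ne]
  rw [e] at h
  linarith
end

section
/- Let θ_i, θ_j : [−τ, ∞) → ℝ be C¹ functions with |θ_k'(s)| ≤ R_ω for all s ≥ −τ and k ∈ {i, j}, and suppose R_ω τ < δ/2 and δ/2 < θ_i(t) − θ_j(t) < π − δ at some time t ≥ 0. Then sin(θ_j(t−τ) − θ_i(t)) − sin(θ_i(t−τ) − θ_j(t)) < 0. Indeed, by the sum-to-product identity this difference equals −2 cos((θ_i(t−τ) − θ_i(t))/2 + (θ_j(t−τ) − θ_j(t))/2) · sin((θ_i(t−τ) − θ_j(t−τ))/2 + (θ_i(t) − θ_j(t))/2), where the cosine factor is positive since its argument has absolute value at most R_ω τ < δ/2, and the sine factor is positive since its argument lies strictly between 0 and π − δ/2. -/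
/-!
The bound on `θ_k'` lets each phase move by at most `Rω * τ < δ / 2` during the delay
(`abs_sub_delay_le`). Since `δ / 2 < π - δ` forces `δ < 2 * π / 3`, the argument of the cosine has
absolute value less than `δ / 2 < π / 2`. The argument of the sine differs from `θi t - θj t` by
less than `δ / 2`, hence lies in `(0, π - δ / 2)`. The sum-to-product identity then turns
positivity of both factors into the sign of the difference of sines.
-/

open Real Set

lemma abs_sub_delay_le {θ : ℝ → ℝ} {τ R t : ℝ} (hτ : 0 ≤ τ) (ht : 0 ≤ t)
    (hC1 : ContDiff ℝ 1 θ) (hb : ∀ s : ℝ, -τ ≤ s → |deriv θ s| ≤ R) :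
    |θ (t - τ) - θ t| ≤ R * τ := by
  have h := (convex_Ici (-τ)).norm_image_sub_le_of_norm_deriv_le (f := θ) (C := R)
    (fun x _ => (hC1.differentiable one_ne_zero) x) (fun x hx => hb x hx)
    (show t ∈ Ici (-τ) by simp only [mem_Ici]; linarith)
    (show t - τ ∈ Ici (-τ) by simp only [mem_Ici]; linarith)
  simpa [Real.norm_eq_abs, abs_of_nonneg hτ] using h

/-- Sign estimate for the extremal pair of oscillators: if
`|θ_k'| ≤ R_ω` on `[-τ, ∞)` for `k ∈ {i, j}`, `R_ω τ < δ/2` and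
`δ/2 < θ_i(t) - θ_j(t) < π - δ` at some `t ≥ 0`, then the cosine and sine
factors in the sum-to-product decomposition are positive and
`sin(θ_j(t-τ) - θ_i(t)) - sin(θ_i(t-τ) - θ_j(t)) < 0`. -/
theorem extremal_pair_sign_estimate
    (θi θj : ℝ → ℝ) (τ δ Rω t : ℝ) (hτ : 0 ≤ τ)
    (hC1i : ContDiff ℝ 1 θi) (hC1j : ContDiff ℝ 1 θj)
    (hbi : ∀ s : ℝ, -τ ≤ s → |deriv θi s| ≤ Rω)
    (hbj : ∀ s : ℝ, -τ ≤ s → |deriv θj s| ≤ Rω)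
    (hRτ : Rω * τ < δ / 2) (ht : 0 ≤ t)
    (hlow : δ / 2 < θi t - θj t) (hup : θi t - θj t < π - δ) :
    0 < Real.cos ((θi (t - τ) - θi t) / 2 + (θj (t - τ) - θj t) / 2) ∧
    0 < Real.sin ((θi (t - τ) - θj (t - τ)) / 2 + (θi t - θj t) / 2) ∧
    Real.sin (θj (t - τ) - θi t) - Real.sin (θi (t - τ) - θj t) < 0 := by
  obtain ⟨hi₁, hi₂⟩ := abs_le.mp (abs_sub_delay_le hτ ht hC1i hbi)
  obtain ⟨hj₁, hj₂⟩ := abs_le.mp (abs_sub_delay_le hτ ht hC1j hbj)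
  have hcos : 0 < Real.cos ((θi (t - τ) - θi t) / 2 + (θj (t - τ) - θj t) / 2) :=
    Real.cos_pos_of_mem_Ioo ⟨by linarith, by linarith⟩
  have hsin : 0 < Real.sin ((θi (t - τ) - θj (t - τ)) / 2 + (θi t - θj t) / 2) :=
    Real.sin_pos_of_pos_of_lt_pi (by linarith) (by linarith)
  refine ⟨hcos, hsin, ?_⟩
  have hsub : (θj (t - τ) - θi t - (θi (t - τ) - θj t)) / 2
      = -((θi (t - τ) - θj (t - τ)) / 2 + (θi t - θj t) / 2) := by ring
  have hadd : (θj (t - τ) - θi t + (θi (t - τ) - θj t)) / 2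
      = (θi (t - τ) - θi t) / 2 + (θj (t - τ) - θj t) / 2 := by ring
  rw [Real.sin_sub_sin, hsub, hadd, Real.sin_neg]
  nlinarith [mul_pos hsin hcos]
end
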